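/- Let 0 → A → B → C → 0 be a short exact sequence of finitely generated Λ-modules. Assume that for every prime number ℓ ∉ S the base-changed sequence 0 → A ⊗_Λ Λ_ℓ → B ⊗_Λ Λ_ℓ → C ⊗_Λ Λ_ℓ → 0 is a split exact sequence of Λ_ℓ-modules. Then the original sequence 0 → A → B → C → 0 is split exact. -/

import Mathlib

/-!
Context: `S` a finite set of primes, `R = ℤ[S⁻¹]`, `Λ = R[[t]]`, and for a prime
`ℓ ∉ S`, `Λ_ℓ = ℤ_ℓ[[t]]`, regarded as a `Λ`-algebra via the ring map applying the
canonical (and unique) ring map `R → ℤ_ℓ` to each coefficient.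

STATEMENT 6: if `0 → A → B → C → 0` is a short exact sequence of finitely generated
`Λ`-modules whose base change to `Λ_ℓ` is split exact for every prime `ℓ ∉ S`, then the
original sequence is split exact.
-/

open TensorProduct

/-- `ℤ[S⁻¹]`: the localization of `ℤ` at the multiplicative set generated by the
primes in `S`. -/
abbrev Rloc (S : Finset ℕ) : Type :=
  Localization (Submonoid.closure ((fun q : ℕ => (q : ℤ)) '' (S : Set ℕ)))

/-!
Write `C` as the cokernel of a map `q : G → F` of finite free modules and lift `F → C` to `B`. This
produces `u : G → A`, representing the class of the extension in `Ext¹(C, A)`, and the sequence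
splits iff `u` extends along `q`. Over a Noetherian ring, Krull's intersection theorem for the
cokernel of `Hom(F, A) → Hom(G, A)` shows that it is enough to extend `u` modulo `m ^ n`, for all
maximal ideals `m` and all `n`; a retraction `B → A / m ^ n A` does this.

A maximal ideal `m` of `Λ` contains `t` and a prime `ℓ` that is not invertible in `R`. As
`Λ / ℓ ^ n = Λ_ℓ / ℓ ^ n`, there is a `Λ`-algebra map `Λ_ℓ → Λ / m ^ n`, and it turns a splitting
over `Λ_ℓ` into a retraction modulo `m ^ n`.
-/

section Splitting

variable {L A B C F G : Type*} [CommRing L]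
  [AddCommGroup A] [AddCommGroup B] [AddCommGroup C] [AddCommGroup F] [AddCommGroup G]
  [Module L A] [Module L B] [Module L C] [Module L F] [Module L G]

theorem mem_of_forall_mem_sup_isMaximal_pow_smul_top [IsNoetherianRing L] [Module.Finite L A]
    {N : Submodule L A} {x : A}
    (h : ∀ m : Ideal L, m.IsMaximal → ∀ n : ℕ, x ∈ N ⊔ m ^ n • (⊤ : Submodule L A)) : x ∈ N := by
  by_contra hx
  have hne : N.comap (LinearMap.toSpanSingleton L A x) ≠ ⊤ := fun htop =>
    hx (by simpa using (Ideal.eq_top_iff_one _).1 htop)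
  obtain ⟨m, hm, hle⟩ := Ideal.exists_le_maximal _ hne
  have hmk : N.mkQ x ∈ ⨅ n : ℕ, m ^ n • (⊤ : Submodule L (A ⧸ N)) := by
    refine Submodule.mem_iInf _ |>.2 fun n => ?_
    have hmap := Submodule.mem_map_of_mem (f := N.mkQ) (h m hm n)
    rwa [Submodule.map_sup, Submodule.mkQ_map_self, bot_sup_eq, Submodule.map_smul'',
      Submodule.map_top, Submodule.range_mkQ] at hmap
  obtain ⟨⟨r, hrm⟩, hr : r • N.mkQ x = N.mkQ x⟩ := (m.mem_iInf_smul_pow_eq_bot_iff _).1 hmk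
  have hsub : 1 - r ∈ m := hle <| by
    rw [Submodule.mem_comap, LinearMap.toSpanSingleton_apply, ← Submodule.Quotient.mk_eq_zero,
      ← Submodule.mkQ_apply, map_smul, sub_smul, one_smul, hr, sub_self]
  exact hm.ne_top ((Ideal.eq_top_iff_one m).2 (by simpa using m.add_mem hsub hrm))

theorem linearMap_mem_smul_top_of_forall_apply_mem [Module.Free L G] [Module.Finite L G]
    (I : Ideal L) {w : G →ₗ[L] A} (hw : ∀ z, w z ∈ I • (⊤ : Submodule L A)) :
    w ∈ I • (⊤ : Submodule L (G →ₗ[L] A)) := by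
  let b := Module.Free.chooseBasis L G
  have hsum : w = ∑ i, LinearMap.smulRightₗ (b.coord i) (w (b i)) := b.ext fun j => by
    simp [Finsupp.single_apply, ite_smul]
  rw [hsum]
  refine Submodule.sum_mem _ fun i _ => ?_
  have hmap := Submodule.mem_map_of_mem (f := LinearMap.smulRightₗ (b.coord i)) (hw (b i))
  rw [Submodule.map_smul''] at hmap
  exact Submodule.smul_mono le_rfl le_top hmap

theorem exists_comp_eq_of_forall_isMaximal_pow [IsNoetherianRing L] [Module.Finite L A]
    [Module.Projective L F] [Module.Free L G] [Module.Finite L G] (q : G →ₗ[L] F) (u : G →ₗ[L] A)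
    (h : ∀ m : Ideal L, m.IsMaximal → ∀ n : ℕ,
      ∃ v : F →ₗ[L] A ⧸ m ^ n • (⊤ : Submodule L A), v ∘ₗ q = Submodule.mkQ _ ∘ₗ u) :
    ∃ v : F →ₗ[L] A, v ∘ₗ q = u := by
  suffices u ∈ LinearMap.range (LinearMap.lcomp L A q) from this
  refine mem_of_forall_mem_sup_isMaximal_pow_smul_top fun m hm n => ?_
  obtain ⟨vbar, hvbar⟩ := h m hm n
  obtain ⟨v, hv⟩ := Module.projective_lifting_property
    (Submodule.mkQ (m ^ n • (⊤ : Submodule L A))) vbar (Submodule.mkQ_surjective _)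
  have hdiff : u - v ∘ₗ q ∈ m ^ n • (⊤ : Submodule L (G →ₗ[L] A)) := by
    refine linearMap_mem_smul_top_of_forall_apply_mem _ fun z => ?_
    rw [← Submodule.Quotient.mk_eq_zero, ← Submodule.mkQ_apply, LinearMap.sub_apply, map_sub,
      sub_eq_zero]
    exact (LinearMap.congr_fun hvbar z).symm.trans (LinearMap.congr_fun hv (q z)).symm
  exact Submodule.mem_sup.2 ⟨v ∘ₗ q, ⟨v, rfl⟩, _, hdiff, add_sub_cancel _ _⟩

theorem exists_comp_eq_of_exact_of_comp_eq_zero [Module.Projective L G]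
    {f : A →ₗ[L] B} {g : B →ₗ[L] C} (hfg : Function.Exact f g)
    {ψ : G →ₗ[L] B} (hψ : g ∘ₗ ψ = 0) : ∃ u : G →ₗ[L] A, f ∘ₗ u = ψ := by
  have hmem (z : G) : ψ z ∈ LinearMap.range f := (hfg _).1 (LinearMap.congr_fun hψ z)
  obtain ⟨u, hu⟩ := Module.projective_lifting_property f.rangeRestrict
    (ψ.codRestrict (LinearMap.range f) hmem) f.surjective_rangeRestrict
  exact ⟨u, LinearMap.ext fun z => congrArg Subtype.val (LinearMap.congr_fun hu z)⟩

theorem exists_comp_eq_of_surjective_of_ker_le {p : F →ₗ[L] C} (hp : Function.Surjective p)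
    {ψ : F →ₗ[L] B} (hψ : LinearMap.ker p ≤ LinearMap.ker ψ) : ∃ s : C →ₗ[L] B, s ∘ₗ p = ψ := by
  refine ⟨(LinearMap.ker p).liftQ ψ hψ ∘ₗ (p.quotKerEquivOfSurjective hp).symm.toLinearMap, ?_⟩
  ext y
  have hy : (p.quotKerEquivOfSurjective hp).symm (p y) = Submodule.Quotient.mk y :=
    (LinearEquiv.symm_apply_eq _).2 rfl
  simp [hy]

theorem exists_section_of_forall_isMaximal_pow [IsNoetherianRing L]
    [Module.Finite L A] [Module.Finite L C] {f : A →ₗ[L] B} {g : B →ₗ[L] C}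
    (hfg : Function.Exact f g) (hg : Function.Surjective g)
    (h : ∀ m : Ideal L, m.IsMaximal → ∀ n : ℕ,
      ∃ r : B →ₗ[L] A ⧸ m ^ n • (⊤ : Submodule L A), r ∘ₗ f = Submodule.mkQ _) :
    ∃ s : C →ₗ[L] B, g ∘ₗ s = LinearMap.id := by
  have : Module.FinitePresentation L C := Module.finitePresentation_of_finite L C
  obtain ⟨a, b, p, q, hp, hqp⟩ := Module.FinitePresentation.exists_fin' L C
  obtain ⟨φ, hφ⟩ := Module.projective_lifting_property g p hg
  obtain ⟨u, hu⟩ : ∃ u, f ∘ₗ u = φ ∘ₗ q := exists_comp_eq_of_exact_of_comp_eq_zero hfg <| by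
    rw [← LinearMap.comp_assoc, hφ, hqp.linearMap_comp_eq_zero]
  obtain ⟨v, hv⟩ : ∃ v, v ∘ₗ q = u := exists_comp_eq_of_forall_isMaximal_pow q u fun m hm n => by
    obtain ⟨r, hr⟩ := h m hm n
    exact ⟨r ∘ₗ φ, by rw [LinearMap.comp_assoc, ← hu, ← LinearMap.comp_assoc, hr]⟩
  have hker : LinearMap.ker p ≤ LinearMap.ker (φ - f ∘ₗ v) := by
    rw [hqp.linearMap_ker_eq, LinearMap.range_le_ker_iff, LinearMap.sub_comp, LinearMap.comp_assoc,
      hv, hu, sub_self]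
  obtain ⟨s, hs⟩ := exists_comp_eq_of_surjective_of_ker_le hp hker
  refine ⟨s, (LinearMap.cancel_right hp).1 ?_⟩
  rw [LinearMap.comp_assoc, hs, LinearMap.comp_sub, hφ, ← LinearMap.comp_assoc,
    hfg.linearMap_comp_eq_zero, LinearMap.zero_comp, sub_zero, LinearMap.id_comp]

theorem exists_comp_eq_mkQ_of_baseChange_leftInverse {L' : Type*} [CommRing L'] [Algebra L L']
    {f : A →ₗ[L] B} {ρ : L' ⊗[L] B →ₗ[L'] L' ⊗[L] A} (hρ : ρ ∘ₗ f.baseChange L' = LinearMap.id)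
    {I : Ideal L} (θ : L' →ₐ[L] L ⧸ I) :
    ∃ r : B →ₗ[L] A ⧸ I • (⊤ : Submodule L A), r ∘ₗ f = Submodule.mkQ _ := by
  refine ⟨(quotTensorEquivQuotSMul A I).toLinearMap ∘ₗ θ.toLinearMap.rTensor A ∘ₗ
    ρ.restrictScalars L ∘ₗ TensorProduct.mk L L' B 1, LinearMap.ext fun a => ?_⟩
  have ha : ρ (1 ⊗ₜ f a) = 1 ⊗ₜ a := LinearMap.congr_fun hρ (1 ⊗ₜ a)
  simp [ha]

end Splitting

section PowerSeries

open PowerSeries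

variable {R T : Type*} [CommRing R] [CommRing T]

theorem powerSeries_X_mem_of_isMaximal (m : Ideal R⟦X⟧) [hm : m.IsMaximal] : X ∈ m := by
  by_contra hX
  obtain ⟨y, z, hz, hyz⟩ := hm.exists_inv hX
  have hunit : IsUnit z := isUnit_iff_constantCoeff.2 <| by
    have hconst : constantCoeff z = 1 := by simpa using congrArg constantCoeff hyz
    exact hconst ▸ isUnit_one
  exact hm.ne_top (Ideal.eq_top_of_isUnit_mem m hz hunit)

theorem isMaximal_comap_powerSeries_C (m : Ideal R⟦X⟧) [m.IsMaximal] :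
    (m.comap (C : R →+* R⟦X⟧)).IsMaximal := by
  let _ := Ideal.Quotient.field m
  have hsurj : Function.Surjective ((Ideal.Quotient.mk m).comp (C : R →+* R⟦X⟧)) := by
    intro y
    obtain ⟨f, rfl⟩ := Ideal.Quotient.mk_surjective y
    refine ⟨constantCoeff f, ?_⟩
    rw [RingHom.comp_apply, eq_comm, Ideal.Quotient.eq,
      sub_eq_iff_eq_add.2 f.eq_X_mul_shift_add_const]
    exact m.mul_mem_right _ (powerSeries_X_mem_of_isMaximal m)
  have hmax := RingHom.ker_isMaximal_of_surjective _ hsurj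
  rwa [← RingHom.comap_ker, Ideal.mk_ker] at hmax

theorem ker_powerSeries_map_of_ker_eq_span {χ : R →+* T} {a : R}
    (hχ : RingHom.ker χ = Ideal.span {a}) :
    RingHom.ker (PowerSeries.map χ) = Ideal.span {C a} := by
  ext f
  have hdvd (i : ℕ) : χ (coeff i f) = 0 ↔ a ∣ coeff i f := by
    rw [← RingHom.mem_ker, hχ, Ideal.mem_span_singleton]
  rw [RingHom.mem_ker, Ideal.mem_span_singleton]
  constructor
  · intro hf
    choose c hc using fun i => (hdvd i).1 <| by simpa using congrArg (coeff i) hf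
    exact ⟨PowerSeries.mk c, by ext i; rw [coeff_C_mul, coeff_mk, hc]⟩
  · rintro ⟨k, rfl⟩
    ext i
    simpa using (hdvd i).2 (by simp)

end PowerSeries

theorem nonempty_algHom_quotient_of_ker_le {L L' T : Type*} [CommRing L] [CommRing L']
    [CommRing T] [Algebra L L'] (π : L' →+* T)
    (hπ : Function.Surjective (π.comp (algebraMap L L'))) {I : Ideal L}
    (hI : RingHom.ker (π.comp (algebraMap L L')) ≤ I) : Nonempty (L' →ₐ[L] L ⧸ I) := by
  have hker : RingHom.ker (π.comp (algebraMap L L')) ≤ RingHom.ker (Ideal.Quotient.mk I) := by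
    rwa [Ideal.mk_ker]
  exact ⟨{ (RingHom.liftOfSurjective _ hπ ⟨_, hker⟩).comp π with
    commutes' := RingHom.liftOfSurjective_comp_apply _ hπ ⟨_, hker⟩ }⟩

section LocalizationInt

variable {R : Type*} [CommRing R] [Algebra ℤ R]

theorem exists_prime_natCast_mem_of_isMaximal (M : Submonoid ℤ) [IsLocalization M R]
    (hR : ¬ IsField R) (n : Ideal R) [hn : n.IsMaximal] : ∃ ℓ : ℕ, ℓ.Prime ∧ (ℓ : R) ∈ n := by
  have : Nontrivial R := nontrivial_of_ne 0 1 fun h01 => hn.ne_top <|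
    (Ideal.eq_top_iff_one n).2 (h01 ▸ n.zero_mem)
  obtain ⟨ℓ, hℓ⟩ := CharP.exists (R ⧸ n)
  have hmem (k : ℤ) : (k : R) ∈ n ↔ (ℓ : ℤ) ∣ k := by
    rw [← Ideal.Quotient.eq_zero_iff_mem, map_intCast, CharP.intCast_eq_zero_iff (R ⧸ n) ℓ]
  rcases CharP.char_is_prime_or_zero (R ⧸ n) ℓ with hprime | rfl
  · exact ⟨ℓ, hprime, by simpa using (hmem ℓ).2 dvd_rfl⟩
  · have hunder : n.under ℤ = ⊥ := by
      ext k
      simpa using hmem k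
    refine absurd ?_ (Ring.ne_bot_of_isMaximal_of_not_isField hn hR)
    rw [← IsLocalization.map_under M R n, hunder, Ideal.map_bot]

theorem nonempty_ringHom_padicInt_of_not_isUnit (M : Submonoid ℤ) [IsLocalization M R]
    {ℓ : ℕ} [Fact ℓ.Prime] (hℓ : ¬ IsUnit (ℓ : R)) : Nonempty (R →+* ℤ_[ℓ]) := by
  refine ⟨IsLocalization.lift (M := M) (g := Int.castRingHom ℤ_[ℓ]) fun s => ?_⟩
  by_contra hs
  have hdvd : (ℓ : ℤ) ∣ s :=
    (PadicInt.norm_int_lt_one_iff_dvd _).1 (PadicInt.not_isUnit_iff.1 hs)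
  have hunit : IsUnit (algebraMap ℤ R ℓ) :=
    isUnit_of_dvd_unit (map_dvd (algebraMap ℤ R) hdvd) (IsLocalization.map_units R s)
  exact hℓ (by simpa using hunit)

theorem ker_ringHom_zmod_eq_span (M : Submonoid ℤ) [IsLocalization M R]
    {N : ℕ} (χ : R →+* ZMod N) :
    RingHom.ker χ = Ideal.span {(N : R)} := by
  refine le_antisymm (fun x hx => ?_) ((Ideal.span_singleton_le_iff_mem _).2 (by simp))
  obtain ⟨⟨a, s⟩, hs⟩ := IsLocalization.surj M x
  have ha : (a : ZMod N) = 0 := by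
    simpa [RingHom.mem_ker.1 hx] using (congrArg χ hs).symm
  have hdvd : (N : R) ∣ algebraMap ℤ R a := by
    simpa using map_dvd (algebraMap ℤ R) ((ZMod.intCast_zmod_eq_zero_iff_dvd a N).1 ha)
  rw [Ideal.mem_span_singleton, ← (IsLocalization.map_units R s).dvd_mul_right, hs]
  exact hdvd

open PowerSeries in
theorem nonempty_padicInt_powerSeries_algHom_quotient (M : Submonoid ℤ) [IsLocalization M R]
    {ℓ : ℕ} [Fact ℓ.Prime] [Algebra R⟦X⟧ ℤ_[ℓ]⟦X⟧] (φ : R →+* ℤ_[ℓ])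
    (hφ : algebraMap R⟦X⟧ ℤ_[ℓ]⟦X⟧ = PowerSeries.map φ) {m : Ideal R⟦X⟧} (hℓ : (ℓ : R⟦X⟧) ∈ m)
    (n : ℕ) : Nonempty (ℤ_[ℓ]⟦X⟧ →ₐ[R⟦X⟧] R⟦X⟧ ⧸ m ^ n) := by
  let χ : R →+* ZMod (ℓ ^ n) := (PadicInt.toZModPow n).comp φ
  have hχ : (PowerSeries.map (PadicInt.toZModPow n)).comp (algebraMap R⟦X⟧ ℤ_[ℓ]⟦X⟧) =
      PowerSeries.map χ := by
    rw [hφ, ← PowerSeries.map_comp]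
  apply nonempty_algHom_quotient_of_ker_le (PowerSeries.map (PadicInt.toZModPow n)) <;> rw [hχ]
  · exact PowerSeries.map_surjective χ (ZMod.ringHom_surjective χ)
  · rw [ker_powerSeries_map_of_ker_eq_span (ker_ringHom_zmod_eq_span M χ),
      Ideal.span_singleton_le_iff_mem]
    simpa using Ideal.pow_mem_pow hℓ n

open PowerSeries in
theorem ses_split_of_padic_baseChange_split_general (M : Submonoid ℤ) [IsLocalization M R]
    (hR : ¬ IsField R) {A B C : Type*}
    [AddCommGroup A] [AddCommGroup B] [AddCommGroup C]
    [Module R⟦X⟧ A] [Module R⟦X⟧ B] [Module R⟦X⟧ C]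
    [Module.Finite R⟦X⟧ A] [Module.Finite R⟦X⟧ C]
    (f : A →ₗ[R⟦X⟧] B) (g : B →ₗ[R⟦X⟧] C)
    (hfg : Function.Exact f g) (hg : Function.Surjective g)
    (h : ∀ (ℓ : ℕ) [Fact ℓ.Prime] [Algebra R⟦X⟧ ℤ_[ℓ]⟦X⟧],
      (∃ φ : R →+* ℤ_[ℓ], algebraMap R⟦X⟧ ℤ_[ℓ]⟦X⟧ = PowerSeries.map φ) →
        Function.Injective (f.baseChange ℤ_[ℓ]⟦X⟧) ∧
        ∃ σ : ℤ_[ℓ]⟦X⟧ ⊗[R⟦X⟧] C →ₗ[ℤ_[ℓ]⟦X⟧] ℤ_[ℓ]⟦X⟧ ⊗[R⟦X⟧] B,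
          (g.baseChange ℤ_[ℓ]⟦X⟧).comp σ = LinearMap.id) :
    ∃ s : C →ₗ[R⟦X⟧] B, g.comp s = LinearMap.id := by
  have : IsNoetherianRing R := IsLocalization.isNoetherianRing M R inferInstance
  refine exists_section_of_forall_isMaximal_pow hfg hg fun m hm n => ?_
  have hmC := isMaximal_comap_powerSeries_C m
  obtain ⟨ℓ, hℓ, hℓm⟩ := exists_prime_natCast_mem_of_isMaximal M hR (m.comap PowerSeries.C)
  have : Fact ℓ.Prime := ⟨hℓ⟩
  obtain ⟨φ⟩ := nonempty_ringHom_padicInt_of_not_isUnit M (R := R) (ℓ := ℓ) fun hunit =>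
    hmC.ne_top (Ideal.eq_top_of_isUnit_mem _ hℓm hunit)
  let _ : Algebra R⟦X⟧ ℤ_[ℓ]⟦X⟧ := (PowerSeries.map φ).toAlgebra
  obtain ⟨θ⟩ := nonempty_padicInt_powerSeries_algHom_quotient M φ rfl (by simpa using hℓm) n
  have hexact : Function.Exact (f.baseChange ℤ_[ℓ]⟦X⟧) (g.baseChange ℤ_[ℓ]⟦X⟧) :=
    lTensor_exact ℤ_[ℓ]⟦X⟧ hfg hg
  obtain ⟨-, ρ, hρ⟩ := (hexact.split_tfae'.out 0 1).1 (h ℓ ⟨φ, rfl⟩)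
  exact exists_comp_eq_mkQ_of_baseChange_leftInverse hρ θ

end LocalizationInt

theorem exists_dvd_of_prime_dvd_mem_closure {α : Type*} [CommMonoidWithZero α] {p : α}
    (hp : Prime p) {T : Set α} {x : α} (hx : x ∈ Submonoid.closure T) (hpx : p ∣ x) :
    ∃ y ∈ T, p ∣ y := by
  obtain ⟨l, hl, rfl⟩ := Submonoid.exists_list_of_mem_closure hx
  obtain ⟨y, hy, hpy⟩ := hp.dvd_prod_iff.1 hpx
  exact ⟨y, hl y hy, hpy⟩

/-- The multiplicative set generated by `S`, at which `ℤ` is localized to give `Rloc S`. -/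
abbrev invertedSubmonoid (S : Finset ℕ) : Submonoid ℤ :=
  Submonoid.closure ((fun q : ℕ => (q : ℤ)) '' (S : Set ℕ))

theorem isUnit_natCast_rloc_iff_mem {S : Finset ℕ} (hS : ∀ q ∈ S, q.Prime) {ℓ : ℕ}
    (hℓ : ℓ.Prime) : IsUnit (ℓ : Rloc S) ↔ ℓ ∈ S := by
  rw [← map_natCast (algebraMap ℤ (Rloc S)),
    IsLocalization.algebraMap_isUnit_iff (invertedSubmonoid S)]
  constructor
  · rintro ⟨s, hs, hdvd⟩
    obtain ⟨-, ⟨q, hq, rfl⟩, hℓq⟩ :=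
      exists_dvd_of_prime_dvd_mem_closure (Nat.prime_iff_prime_int.1 hℓ) hs hdvd
    rwa [(Nat.prime_dvd_prime_iff_eq hℓ (hS q hq)).1 (Int.natCast_dvd_natCast.1 hℓq)]
  · exact fun hmem => ⟨ℓ, Submonoid.subset_closure ⟨ℓ, hmem, rfl⟩, dvd_rfl⟩

theorem notMem_of_ringHom_rloc_padicInt {S : Finset ℕ} (hS : ∀ q ∈ S, q.Prime) {ℓ : ℕ}
    [hℓ : Fact ℓ.Prime] (φ : Rloc S →+* ℤ_[ℓ]) : ℓ ∉ S := by
  intro hmem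
  have hunit := ((isUnit_natCast_rloc_iff_mem hS hℓ.out).2 hmem).map φ
  rw [map_natCast] at hunit
  exact PadicInt.prime_p.not_isUnit hunit

theorem not_isField_rloc {S : Finset ℕ} (hS : ∀ q ∈ S, q.Prime) : ¬ IsField (Rloc S) := by
  intro hfield
  obtain ⟨ℓ, hℓ, hℓS⟩ := Nat.infinite_setOfPred_prime.exists_notMem_finset S
  have : Fact ℓ.Prime := ⟨hℓ⟩
  have hunit : ¬ IsUnit (ℓ : Rloc S) := mt (isUnit_natCast_rloc_iff_mem hS hℓ).1 hℓS
  obtain ⟨φ⟩ := nonempty_ringHom_padicInt_of_not_isUnit (invertedSubmonoid S) hunit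
  have hzero : (ℓ : Rloc S) ≠ 0 := fun h0 => PadicInt.prime_p.ne_zero (by simpa using congrArg φ h0)
  obtain ⟨y, hy⟩ := hfield.mul_inv_cancel hzero
  exact hunit (IsUnit.of_mul_eq_one y hy)

theorem ses_split_of_padic_baseChange_split
    (S : Finset ℕ) (hS : ∀ q ∈ S, Nat.Prime q)
    (A B C : Type*) [AddCommGroup A] [AddCommGroup B] [AddCommGroup C]
    [Module (PowerSeries (Rloc S)) A] [Module (PowerSeries (Rloc S)) B]
    [Module (PowerSeries (Rloc S)) C]
    [Module.Finite (PowerSeries (Rloc S)) A] [Module.Finite (PowerSeries (Rloc S)) B]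
    [Module.Finite (PowerSeries (Rloc S)) C]
    (f : A →ₗ[PowerSeries (Rloc S)] B) (g : B →ₗ[PowerSeries (Rloc S)] C)
    (hf : Function.Injective f) (hfg : Function.Exact f g) (hg : Function.Surjective g)
    (h : ∀ (ℓ : ℕ) [Fact ℓ.Prime], ℓ ∉ S →
      ∀ [Algebra (PowerSeries (Rloc S)) (PowerSeries ℤ_[ℓ])],
        (∃ φ : Rloc S →+* ℤ_[ℓ],
            algebraMap (PowerSeries (Rloc S)) (PowerSeries ℤ_[ℓ]) = PowerSeries.map φ) →
        Function.Injective (f.baseChange (PowerSeries ℤ_[ℓ])) ∧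
        Function.Exact (f.baseChange (PowerSeries ℤ_[ℓ]))
          (g.baseChange (PowerSeries ℤ_[ℓ])) ∧
        Function.Surjective (g.baseChange (PowerSeries ℤ_[ℓ])) ∧
        ∃ σ : PowerSeries ℤ_[ℓ] ⊗[PowerSeries (Rloc S)] C →ₗ[PowerSeries ℤ_[ℓ]]
            PowerSeries ℤ_[ℓ] ⊗[PowerSeries (Rloc S)] B,
          (g.baseChange (PowerSeries ℤ_[ℓ])).comp σ = LinearMap.id) :
    ∃ s : C →ₗ[PowerSeries (Rloc S)] B, g.comp s = LinearMap.id := by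
  refine ses_split_of_padic_baseChange_split_general (invertedSubmonoid S) (not_isField_rloc hS)
    f g hfg hg ?_
  exact fun ℓ _ _ hφ => (h ℓ (notMem_of_ringHom_rloc_padicInt hS hφ.choose) hφ).imp_right (·.2.2)
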